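/- Let v ∉ [n]. If X is a d-hypertree on [n] and Y is a (d-1)-hypertree on [n] over F_2, then Ext_v(X,Y) = X ⊕ Cone_v(Y) is a d-hypertree on the vertex set [n] ∪ {v}. -/

import Mathlib

open Finset symmDiff

/-- The vertex set `[n] = {1, …, n}`. -/
def rng (n : ℕ) : Finset ℕ := Finset.Icc 1 n

/-- The set of `d`-simplices (i.e. `(d+1)`-element subsets) on the vertex set `V`. -/
def simplices (V : Finset ℕ) (d : ℕ) : Finset (Finset ℕ) :=
  V.powerset.filter fun σ => σ.card = d + 1

/-- The mod-2 boundary of a set `X` of simplices: the set of faces `τ` of codimension one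
(`|τ| + 1 = |σ|`) contained in an odd number of members of `X`. -/
def bd (X : Finset (Finset ℕ)) : Finset (Finset ℕ) :=
  (X.biUnion fun σ => σ.powerset).filter
    fun τ => Odd (X.filter fun σ => τ ⊆ σ ∧ τ.card + 1 = σ.card).card

/-- A set of simplices is acyclic (a forest) over `F_2` if no nonempty subset has
empty boundary. -/
def IsAcyclic (F : Finset (Finset ℕ)) : Prop :=
  ∀ Y ⊆ F, Y ≠ ∅ → bd Y ≠ ∅

/-- A `d`-hypertree on `V`: a maximal acyclic set of `d`-simplices on `V`. -/
def IsHypertreeOn (V : Finset ℕ) (d : ℕ) (T : Finset (Finset ℕ)) : Prop :=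
  T ⊆ simplices V d ∧ IsAcyclic T ∧
    ∀ G, T ⊆ G → G ⊆ simplices V d → IsAcyclic G → G = T

/-- A simple cycle over `F_2`: a nonempty set with empty boundary, no nonempty proper
subset of which has empty boundary. -/
def IsSimpleCycle (Z : Finset (Finset ℕ)) : Prop :=
  Z ≠ ∅ ∧ bd Z = ∅ ∧ ∀ Y ⊂ Z, Y ≠ ∅ → bd Y ≠ ∅

/-- Collapsibility: `X` can be reduced to `∅` by repeatedly removing a simplex `σ ∈ X`
containing a codimension-one face contained in no other current member of `X`. -/
inductive Collapsible : Finset (Finset ℕ) → Prop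
  | empty : Collapsible ∅
  | step (X : Finset (Finset ℕ)) (σ τ : Finset ℕ) (hσ : σ ∈ X) (hτ : τ ⊆ σ)
      (hcard : τ.card + 1 = σ.card) (huniq : ∀ σ' ∈ X, τ ⊆ σ' → σ' = σ)
      (h : Collapsible (X.erase σ)) : Collapsible X

/-- The cone over `X` with apex `v`. -/
def cone (v : ℕ) (X : Finset (Finset ℕ)) : Finset (Finset ℕ) :=
  X.image (insert v)

/-- The link of the vertex `v` in `X`. -/
def link (v : ℕ) (X : Finset (Finset ℕ)) : Finset (Finset ℕ) :=
  (X.filter fun σ => v ∈ σ).image fun σ => σ.erase v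

/-- `fill Z T`: the subset `F ⊆ T` with `∂F = Z` (when it exists; it is unique when `T`
is a hypertree and `Z` a cycle). -/
noncomputable def fill (Z T : Finset (Finset ℕ)) : Finset (Finset ℕ) :=
  if h : ∃ F, F ⊆ T ∧ bd F = Z then h.choose else ∅

/-- The average filling-volume `μ(T)` of a `d`-hypertree `T` on `[n]`. -/
noncomputable def fillVolAvg (n d : ℕ) (T : Finset (Finset ℕ)) : ℝ :=
  (∑ σ ∈ simplices (rng n) d, ((fill (bd {σ}) T).card : ℝ)) / (n.choose (d + 1) : ℝ)

open Classical in
/-- The cut of `τ` in `T`: the set of `d`-simplices `σ` on `[n]` such that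
`T ⊕ {τ} ⊕ {σ}` is a `d`-hypertree on `[n]`. -/
noncomputable def cut (n d : ℕ) (τ : Finset ℕ) (T : Finset (Finset ℕ)) : Finset (Finset ℕ) :=
  (simplices (rng n) d).filter fun σ => IsHypertreeOn (rng n) d ((T ∆ {τ}) ∆ {σ})

/-!
Split a chain on `V ∪ {v}` as `Z = A ⊕ Cone_v(L)`, with `A` the deletion and `L` the link of `v`.
Since `∂ Cone_v(L) = L ⊕ Cone_v(∂L)`, the boundary splits as `∂Z = (∂A ⊕ L) ⊕ Cone_v(∂L)`.

A cycle in `Ext_v(X, Y)` thus has a link that is a cycle in `Y`, hence empty, and then `A` is a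
cycle in `X`, hence also empty. Conversely, to realise `∂Z` inside `Ext_v(X, Y)`, choose `G ⊆ Y`
with `∂G = ∂L`, fill the cycle `G ⊕ L` by a chain `E` on `V` (possible because the full simplex is
a cone), and choose `F ⊆ X` with `∂F = ∂(A ⊕ E)`; then `∂(F ⊕ Cone_v(G)) = ∂Z`. So the extension is
acyclic and its boundaries exhaust all boundaries, which characterises hypertrees.
-/

section SymmDiff

variable {α : Type*} [DecidableEq α]

theorem filter_symmDiff (p : α → Prop) [DecidablePred p] (s t : Finset α) :
    (s ∆ t).filter p = s.filter p ∆ t.filter p := by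
  ext a
  simp only [mem_filter, mem_symmDiff]
  tauto

theorem odd_card_symmDiff (s t : Finset α) : Odd #(s ∆ t) ↔ Xor (Odd #s) (Odd #t) := by
  have hcard : #(s ∆ t) = #(s \ t) + #(t \ s) := card_union_of_disjoint disjoint_sdiff_sdiff
  have hs := card_sdiff_add_card_inter s t
  have ht := card_sdiff_add_card_inter t s
  rw [inter_comm] at ht
  rw [hcard, ← hs, ← ht]
  grind [Xor]

theorem insert_eq_singleton_symmDiff {a : α} {s : Finset α} (ha : a ∉ s) :
    insert a s = {a} ∆ s := by
  rw [insert_eq, symmDiff_eq_union (disjoint_singleton_left.2 ha)]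

theorem symmDiff_subset {s t u : Finset α} (hs : s ⊆ u) (ht : t ⊆ u) : s ∆ t ⊆ u :=
  symmDiff_subset_union.trans (union_subset hs ht)

end SymmDiff

section Boundary

theorem mem_bd {C : Finset (Finset ℕ)} {τ : Finset ℕ} :
    τ ∈ bd C ↔ Odd #{σ ∈ C | τ ⊆ σ ∧ #τ + 1 = #σ} := by
  refine mem_filter.trans (and_iff_right_of_imp fun hodd => ?_)
  obtain ⟨σ, hσ⟩ := card_pos.1 hodd.pos
  have ⟨hσC, hτσ, _⟩ := mem_filter.1 hσ
  exact mem_biUnion.2 ⟨σ, hσC, mem_powerset.2 hτσ⟩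

theorem exists_subset_of_mem_bd {C : Finset (Finset ℕ)} {τ : Finset ℕ} (hτ : τ ∈ bd C) :
    ∃ σ ∈ C, τ ⊆ σ := by
  simpa only [mem_biUnion, mem_powerset] using (mem_filter.1 hτ).1

theorem bd_singleton (σ : Finset ℕ) : bd {σ} = σ.image σ.erase := by
  ext τ
  rw [mem_bd, filter_singleton, mem_image, ← covBy_iff_exists_erase, covBy_iff_card_sdiff_eq_one]
  by_cases hτ : τ ⊆ σ
  · have := card_sdiff_add_card_eq_card hτ
    grind
  · simp [hτ]

theorem bd_symmDiff (C D : Finset (Finset ℕ)) : bd (C ∆ D) = bd C ∆ bd D := by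
  ext τ
  simp only [mem_bd, filter_symmDiff, odd_card_symmDiff, mem_symmDiff, Xor]

theorem bd_insert {C : Finset (Finset ℕ)} {σ : Finset ℕ} (hσ : σ ∉ C) :
    bd (insert σ C) = bd {σ} ∆ bd C := by
  rw [insert_eq_singleton_symmDiff hσ, bd_symmDiff]

end Boundary

section Cone

variable {v : ℕ} {A B C : Finset (Finset ℕ)}

/-- The simplices of `C` do not contain the vertex `v`: a cone over `C` with apex `v` can be
formed without degeneration. -/
def Avoids (v : ℕ) (C : Finset (Finset ℕ)) : Prop :=
  ∀ σ ∈ C, v ∉ σ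

/-- The deletion of the vertex `v` from `Z`, complementary to the link: the simplices of `Z` that
do not contain `v`. -/
def deletion (v : ℕ) (Z : Finset (Finset ℕ)) : Finset (Finset ℕ) :=
  {σ ∈ Z | v ∉ σ}

theorem Avoids.mono (hC : Avoids v C) (hA : A ⊆ C) : Avoids v A :=
  fun σ hσ => hC σ (hA hσ)

theorem Avoids.symmDiff (hA : Avoids v A) (hB : Avoids v B) : Avoids v (A ∆ B) := fun σ hσ =>
  (mem_symmDiff.1 hσ).elim (fun h => hA σ h.1) (fun h => hB σ h.1)

theorem Avoids.bd (hC : Avoids v C) : Avoids v (bd C) := fun _ hτ hv =>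
  have ⟨σ, hσ, hτσ⟩ := exists_subset_of_mem_bd hτ
  hC σ hσ (hτσ hv)

theorem avoids_deletion (v : ℕ) (Z : Finset (Finset ℕ)) : Avoids v (deletion v Z) :=
  fun _ hσ => (mem_filter.1 hσ).2

theorem avoids_link (v : ℕ) (Z : Finset (Finset ℕ)) : Avoids v (link v Z) := by
  intro τ hτ
  obtain ⟨σ, -, rfl⟩ := mem_image.1 hτ
  exact notMem_erase v σ

theorem mem_cone (hC : Avoids v C) {σ : Finset ℕ} : σ ∈ cone v C ↔ v ∈ σ ∧ σ.erase v ∈ C := by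
  constructor
  · intro hσ
    obtain ⟨τ, hτ, rfl⟩ := mem_image.1 hσ
    exact ⟨mem_insert_self v τ, by rwa [erase_insert (hC τ hτ)]⟩
  · rintro ⟨hv, hσ⟩
    exact mem_image.2 ⟨_, hσ, insert_erase hv⟩

theorem mem_link {Z : Finset (Finset ℕ)} {τ : Finset ℕ} :
    τ ∈ link v Z ↔ v ∉ τ ∧ insert v τ ∈ Z := by
  constructor
  · intro hτ
    obtain ⟨σ, hσ, rfl⟩ := mem_image.1 hτ
    have ⟨hσZ, hv⟩ := mem_filter.1 hσ
    exact ⟨notMem_erase v σ, by rwa [insert_erase hv]⟩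
  · rintro ⟨hv, hτ⟩
    exact mem_image.2 ⟨_, mem_filter.2 ⟨hτ, mem_insert_self v τ⟩, erase_insert hv⟩

theorem link_mono {Z W : Finset (Finset ℕ)} (h : Z ⊆ W) : link v Z ⊆ link v W :=
  image_subset_image (filter_subset_filter _ h)

theorem deletion_mono {Z W : Finset (Finset ℕ)} (h : Z ⊆ W) : deletion v Z ⊆ deletion v W :=
  filter_subset_filter _ h

theorem symmDiff_cone_eq_union (hA : Avoids v A) (B : Finset (Finset ℕ)) :
    A ∆ cone v B = A ∪ cone v B := by
  refine symmDiff_eq_union (disjoint_left.2 fun σ hσ hσB => hA σ hσ ?_)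
  obtain ⟨τ, -, rfl⟩ := mem_image.1 hσB
  exact mem_insert_self v τ

theorem symmDiff_cone_mono {F G : Finset (Finset ℕ)} (hA : Avoids v A) (hF : F ⊆ A) (hG : G ⊆ B) :
    F ∆ cone v G ⊆ A ∆ cone v B := by
  rw [symmDiff_cone_eq_union hA, symmDiff_cone_eq_union (hA.mono hF)]
  exact union_subset_union hF (image_subset_image hG)

theorem cone_symmDiff (hA : Avoids v A) (hB : Avoids v B) :
    cone v (A ∆ B) = cone v A ∆ cone v B := by
  ext σ
  simp only [mem_symmDiff, mem_cone hA, mem_cone hB, mem_cone (hA.symmDiff hB)]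
  tauto

theorem deletion_symmDiff_cone_link (v : ℕ) (Z : Finset (Finset ℕ)) :
    deletion v Z ∆ cone v (link v Z) = Z := by
  ext σ
  rw [symmDiff_cone_eq_union (avoids_deletion v Z), mem_union, mem_cone (avoids_link v Z), mem_link,
    deletion, mem_filter]
  by_cases hv : v ∈ σ <;> simp [hv]

theorem deletion_symmDiff_cone (hA : Avoids v A) (B : Finset (Finset ℕ)) :
    deletion v (A ∆ cone v B) = A := by
  have hcone : deletion v (cone v B) = ∅ := by
    simp [deletion, cone, filter_image]
  rw [deletion, filter_symmDiff, filter_true_of_mem hA, ← deletion, hcone]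
  exact symmDiff_bot A

theorem link_symmDiff_cone (hA : Avoids v A) (hB : Avoids v B) :
    link v (A ∆ cone v B) = B := by
  ext τ
  have hτA : insert v τ ∉ A := fun h => hA _ h (mem_insert_self v τ)
  rw [symmDiff_cone_eq_union hA, mem_link, mem_union, mem_cone hB]
  by_cases hv : v ∈ τ
  · simpa [hv] using fun h => hB τ h hv
  · simp [hv, hτA]

end Cone

section ConeBoundary

variable {v : ℕ} {C : Finset (Finset ℕ)}

theorem bd_singleton_insert {σ : Finset ℕ} (hv : v ∉ σ) :
    bd {insert v σ} = {σ} ∆ cone v (bd {σ}) := by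
  have hσ : Avoids v {σ} := fun τ hτ => by rwa [mem_singleton.1 hτ]
  have hface : ∀ a ∈ σ, (insert v σ).erase a = insert v (σ.erase a) := fun a ha =>
    erase_insert_of_ne (ne_of_mem_of_not_mem ha hv).symm
  rw [symmDiff_cone_eq_union hσ, bd_singleton, bd_singleton, image_insert, erase_insert hv,
    image_congr hface, cone, image_image, insert_eq]
  rfl

theorem bd_cone (hC : Avoids v C) : bd (cone v C) = C ∆ cone v (bd C) := by
  induction C using Finset.induction_on with
  | empty => rfl
  | insert σ C hσ ih =>
    have hC' : Avoids v C := hC.mono (subset_insert σ C)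
    have hv : v ∉ σ := hC σ (mem_insert_self σ C)
    have hσ' : insert v σ ∉ cone v C := by
      rwa [mem_cone hC', erase_insert hv, and_iff_right (mem_insert_self v σ)]
    have hbσ : Avoids v (bd {σ}) :=
      (hC.mono (singleton_subset_iff.2 (mem_insert_self σ C))).bd
    calc bd (cone v (insert σ C))
        = bd {insert v σ} ∆ bd (cone v C) := by rw [cone, image_insert, ← cone, bd_insert hσ']
      _ = ({σ} ∆ C) ∆ (cone v (bd {σ}) ∆ cone v (bd C)) := by
          rw [bd_singleton_insert hv, ih hC', symmDiff_symmDiff_symmDiff_comm]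
      _ = insert σ C ∆ cone v (bd (insert σ C)) := by
          rw [← cone_symmDiff hbσ hC'.bd, ← bd_insert hσ, ← insert_eq_singleton_symmDiff hσ]

theorem bd_eq_symmDiff_cone (v : ℕ) (Z : Finset (Finset ℕ)) :
    bd Z = (bd (deletion v Z) ∆ link v Z) ∆ cone v (bd (link v Z)) := by
  conv_lhs => rw [← deletion_symmDiff_cone_link v Z]
  rw [bd_symmDiff, bd_cone (avoids_link v Z), symmDiff_assoc]

theorem link_bd (v : ℕ) (Z : Finset (Finset ℕ)) : link v (bd Z) = bd (link v Z) := by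
  rw [bd_eq_symmDiff_cone v Z, link_symmDiff_cone
    ((avoids_deletion v Z).bd.symmDiff (avoids_link v Z)) (avoids_link v Z).bd]

theorem deletion_bd (v : ℕ) (Z : Finset (Finset ℕ)) :
    deletion v (bd Z) = bd (deletion v Z) ∆ link v Z := by
  rw [bd_eq_symmDiff_cone v Z, deletion_symmDiff_cone
    ((avoids_deletion v Z).bd.symmDiff (avoids_link v Z))]

theorem bd_link_eq_empty {Z : Finset (Finset ℕ)} (hZ : bd Z = ∅) (v : ℕ) :
    bd (link v Z) = ∅ := by
  rw [← link_bd, hZ]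
  rfl

theorem bd_deletion_eq_link {Z : Finset (Finset ℕ)} (hZ : bd Z = ∅) (v : ℕ) :
    bd (deletion v Z) = link v Z := by
  rw [← symmDiff_eq_empty, ← deletion_bd, hZ]
  rfl

end ConeBoundary

section Simplices

variable {V : Finset ℕ} {v d : ℕ} {C Z : Finset (Finset ℕ)}

theorem mem_simplices {σ : Finset ℕ} : σ ∈ simplices V d ↔ σ ⊆ V ∧ #σ = d + 1 := by
  rw [simplices, mem_filter, mem_powerset]

theorem simplices_mono {W : Finset ℕ} (h : V ⊆ W) (d : ℕ) : simplices V d ⊆ simplices W d :=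
  filter_subset_filter _ (powerset_mono.2 h)

theorem avoids_of_subset_simplices (hv : v ∉ V) (hC : C ⊆ simplices V d) : Avoids v C :=
  fun _ hσ hvσ => hv ((mem_simplices.1 (hC hσ)).1 hvσ)

theorem cone_subset_simplices (hC : C ⊆ simplices V d) (hv : Avoids v C) :
    cone v C ⊆ simplices (insert v V) (d + 1) := by
  refine image_subset_iff.2 fun σ hσ => ?_
  have ⟨hσV, hcard⟩ := mem_simplices.1 (hC hσ)
  exact mem_simplices.2
    ⟨insert_subset_insert v hσV, by rw [card_insert_of_notMem (hv σ hσ), hcard]⟩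

theorem deletion_subset_simplices (hZ : Z ⊆ simplices (insert v V) d) :
    deletion v Z ⊆ simplices V d := fun σ hσ => by
  have ⟨hσZ, hv⟩ := mem_filter.1 hσ
  have ⟨hσV, hcard⟩ := mem_simplices.1 (hZ hσZ)
  exact mem_simplices.2 ⟨(subset_insert_iff_of_notMem hv).1 hσV, hcard⟩

theorem link_subset_simplices (hZ : Z ⊆ simplices (insert v V) (d + 1)) :
    link v Z ⊆ simplices V d := fun τ hτ => by
  have ⟨hv, hτZ⟩ := mem_link.1 hτ
  have ⟨hτV, hcard⟩ := mem_simplices.1 (hZ hτZ)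
  rw [card_insert_of_notMem hv, Nat.add_right_cancel_iff] at hcard
  exact mem_simplices.2
    ⟨(subset_insert_iff_of_notMem hv).1 ((subset_insert v τ).trans hτV), hcard⟩

theorem exists_subset_simplices_bd_eq (hC : C ⊆ simplices V d) (hbC : bd C = ∅) :
    ∃ D ⊆ simplices V (d + 1), bd D = C := by
  obtain rfl | ⟨σ, hσ⟩ := C.eq_empty_or_nonempty
  · exact ⟨∅, empty_subset _, rfl⟩
  have ⟨hσV, hcard⟩ := mem_simplices.1 (hC hσ)
  obtain ⟨w, hw⟩ : σ.Nonempty := card_pos.1 (by lia)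
  refine ⟨cone w (deletion w C), ?_, ?_⟩
  · rw [← insert_eq_of_mem (hσV hw)]
    exact cone_subset_simplices ((filter_subset _ C).trans hC) (avoids_deletion w C)
  · rw [bd_cone (avoids_deletion w C), bd_deletion_eq_link hbC, deletion_symmDiff_cone_link]

end Simplices

section Hypertree

variable {V : Finset ℕ} {v d : ℕ} {T X Y Z D : Finset (Finset ℕ)}

theorem IsAcyclic.mono (hT : IsAcyclic T) (hX : X ⊆ T) : IsAcyclic X :=
  fun Z hZ => hT Z (hZ.trans hX)

theorem IsAcyclic.eq_empty (hT : IsAcyclic T) (hZ : Z ⊆ T) (hbZ : bd Z = ∅) : Z = ∅ :=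
  not_imp_not.1 (hT Z hZ) hbZ

theorem IsAcyclic.isAcyclic_insert_iff (hT : IsAcyclic T) {σ : Finset ℕ} (hσ : σ ∉ T) :
    IsAcyclic (insert σ T) ↔ ¬∃ F ⊆ T, bd F = bd {σ} := by
  constructor
  · rintro hσT ⟨F, hF, hbF⟩
    refine hσT (insert σ F) (insert_subset_insert σ hF) (insert_ne_empty σ F) ?_
    rw [bd_insert (notMem_mono hF hσ), hbF, symmDiff_eq_empty]
  · intro hspan Z hZ hne hbZ
    have hσZ : σ ∈ Z := by
      by_contra hσZ
      exact hT Z ((subset_insert_iff_of_notMem hσZ).1 hZ) hne hbZ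
    rw [← insert_erase hσZ, bd_insert (notMem_erase σ Z), symmDiff_eq_empty] at hbZ
    exact hspan ⟨Z.erase σ, subset_insert_iff.1 hZ, hbZ.symm⟩

theorem isHypertreeOn_iff : IsHypertreeOn V d T ↔
    T ⊆ simplices V d ∧ IsAcyclic T ∧ ∀ σ ∈ simplices V d, ∃ F ⊆ T, bd F = bd {σ} := by
  refine and_congr_right fun hTV => and_congr_right fun hT => ⟨fun hmax σ hσ => ?_, ?_⟩
  · by_cases hσT : σ ∈ T
    · exact ⟨{σ}, singleton_subset_iff.2 hσT, rfl⟩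
    by_contra hspan
    have hins := hmax _ (subset_insert σ T) (insert_subset hσ hTV)
      ((hT.isAcyclic_insert_iff hσT).2 hspan)
    exact hσT (insert_eq_self.1 hins)
  · intro hspan G hTG hGV hG
    refine Subset.antisymm (fun σ hσ => ?_) hTG
    by_contra hσT
    exact (hT.isAcyclic_insert_iff hσT).1 (hG.mono (insert_subset hσ hTG)) (hspan σ (hGV hσ))

theorem IsHypertreeOn.exists_bd_eq (hT : IsHypertreeOn V d T) (hD : D ⊆ simplices V d) :
    ∃ F ⊆ T, bd F = bd D := by
  induction D using Finset.induction_on with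
  | empty => exact ⟨∅, empty_subset T, rfl⟩
  | insert σ D hσ ih =>
    obtain ⟨F, hF, hbF⟩ := ih ((subset_insert σ D).trans hD)
    obtain ⟨E, hE, hbE⟩ := (isHypertreeOn_iff.1 hT).2.2 σ (hD (mem_insert_self σ D))
    exact ⟨E ∆ F, symmDiff_subset hE hF, by rw [bd_symmDiff, bd_insert hσ, hbE, hbF]⟩

theorem IsAcyclic.symmDiff_cone (hX : IsAcyclic X) (hY : IsAcyclic Y) (hvX : Avoids v X)
    (hvY : Avoids v Y) : IsAcyclic (X ∆ cone v Y) := by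
  intro Z hZ hne hbZ
  have hlinkY : link v Z ⊆ Y := (link_mono hZ).trans_eq (link_symmDiff_cone hvX hvY)
  have hdelX : deletion v Z ⊆ X := (deletion_mono hZ).trans_eq (deletion_symmDiff_cone hvX Y)
  have hlink : link v Z = ∅ := hY.eq_empty hlinkY (bd_link_eq_empty hbZ v)
  have hdel : deletion v Z = ∅ := hX.eq_empty hdelX ((bd_deletion_eq_link hbZ v).trans hlink)
  apply hne
  rw [← deletion_symmDiff_cone_link v Z, hdel, hlink]
  rfl

theorem exists_bd_eq_of_subset_simplices_insert (hv : v ∉ V) (hX : IsHypertreeOn V (d + 1) X)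
    (hY : IsHypertreeOn V d Y) (hD : D ⊆ simplices (insert v V) (d + 1)) :
    ∃ F ⊆ X ∆ cone v Y, bd F = bd D := by
  set A := deletion v D
  set L := link v D
  have hL : L ⊆ simplices V d := link_subset_simplices hD
  obtain ⟨G, hGY, hbG⟩ := hY.exists_bd_eq hL
  obtain ⟨E, hE, hbE⟩ : ∃ E ⊆ simplices V (d + 1), bd E = G ∆ L :=
    exists_subset_simplices_bd_eq (symmDiff_subset (hGY.trans hY.1) hL)
      (by rw [bd_symmDiff, hbG, symmDiff_eq_empty])
  obtain ⟨F, hFX, hbF⟩ := hX.exists_bd_eq (symmDiff_subset (deletion_subset_simplices hD) hE)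
  have hvX : Avoids v X := avoids_of_subset_simplices hv hX.1
  have hvG : Avoids v G := avoids_of_subset_simplices hv (hGY.trans hY.1)
  refine ⟨F ∆ cone v G, symmDiff_cone_mono hvX hFX hGY, ?_⟩
  calc bd (F ∆ cone v G)
      = (bd A ∆ (G ∆ L)) ∆ (G ∆ cone v (bd L)) := by
        rw [bd_symmDiff, hbF, bd_symmDiff, hbE, bd_cone hvG, hbG]
    _ = (bd A ∆ L) ∆ cone v (bd L) := by
        rw [symmDiff_comm G L, ← symmDiff_assoc, ← symmDiff_assoc, symmDiff_symmDiff_cancel_right]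
    _ = bd D := (bd_eq_symmDiff_cone v D).symm

end Hypertree

theorem conical_extension_hypertree_general {V : Finset ℕ} {v d : ℕ} {X Y : Finset (Finset ℕ)}
    (hv : v ∉ V) (hX : IsHypertreeOn V (d + 1) X) (hY : IsHypertreeOn V d Y) :
    IsHypertreeOn (insert v V) (d + 1) (X ∆ cone v Y) := by
  have hvX : Avoids v X := avoids_of_subset_simplices hv hX.1
  have hvY : Avoids v Y := avoids_of_subset_simplices hv hY.1
  refine isHypertreeOn_iff.2 ⟨?_, hX.2.1.symmDiff_cone hY.2.1 hvX hvY, fun σ hσ => ?_⟩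
  · exact symmDiff_subset (hX.1.trans (simplices_mono (subset_insert v V) _))
      (cone_subset_simplices hY.1 hvY)
  · exact exists_bd_eq_of_subset_simplices_insert hv hX hY (singleton_subset_iff.2 hσ)

/-- For `v ∉ [n]`, if `X` is a `d`-hypertree and `Y` a `(d-1)`-hypertree on `[n]`, then
`Ext_v(X,Y) = X ⊕ Cone_v(Y)` is a `d`-hypertree on `[n] ∪ {v}`. -/
theorem conical_extension_hypertree (n d : ℕ) (hd : 1 ≤ d) (v : ℕ) (hv : v ∉ rng n)
    (X Y : Finset (Finset ℕ)) (hX : IsHypertreeOn (rng n) d X)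
    (hY : IsHypertreeOn (rng n) (d - 1) Y) :
    IsHypertreeOn (insert v (rng n)) d (X ∆ cone v Y) := by
  obtain ⟨e, rfl⟩ := Nat.exists_eq_add_of_le' hd
  exact conical_extension_hypertree_general hv hX hY
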